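/- The shuffle product of streams is associative and distributes over pointwise addition: for all streams x, y, z : Stream' ℕ, x ⊗ (y ⊕ z) = (x ⊗ y) ⊕ (x ⊗ z) and (x ⊗ y) ⊗ z = x ⊗ (y ⊗ z). -/

import Mathlib

open Stream'

/-- Pointwise addition of streams. -/
def sadd (xs ys : Stream' ℕ) : Stream' ℕ := fun n => xs.get n + ys.get n

/-- Shuffle product of streams (binomial convolution). -/
def sshuffle (xs ys : Stream' ℕ) : Stream' ℕ :=
  fun n => ∑ k ∈ Finset.range (n + 1), n.choose k * xs.get k * ys.get (n - k)

infixl:65 " ⊕ " => sadd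
infixl:70 " ⊗ " => sshuffle

theorem stmt_9 :
    ∀ x y z : Stream' ℕ,
      x ⊗ (y ⊕ z) = (x ⊗ y) ⊕ (x ⊗ z) ∧ (x ⊗ y) ⊗ z = x ⊗ (y ⊗ z) := by
  intro x y z
  constructor
  · funext n
    simp only [sadd, sshuffle, Stream'.get, mul_add, Finset.sum_add_distrib]
  · funext n
    simp only [sshuffle, Stream'.get, Finset.mul_sum, Finset.sum_mul]
    rw [Finset.sum_sigma', Finset.sum_sigma']
    refine Finset.sum_bij' (fun p _ => ⟨p.2, p.1 - p.2⟩) (fun p _ => ⟨p.1 + p.2, p.1⟩)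
      ?_ ?_ ?_ ?_ ?_
    · rintro ⟨k, j⟩ h
      simp only [Finset.mem_sigma, Finset.mem_range] at h ⊢
      omega
    · rintro ⟨k, j⟩ h
      simp only [Finset.mem_sigma, Finset.mem_range] at h ⊢
      omega
    · rintro ⟨k, j⟩ h
      simp only [Finset.mem_sigma, Finset.mem_range] at h
      have e : j + (k - j) = k := by omega
      simp only [e]
    · rintro ⟨k, j⟩ h
      simp only [Nat.add_sub_cancel_left]
    · rintro ⟨k, j⟩ h
      simp only [Finset.mem_sigma, Finset.mem_range] at h
      have e : n - j - (k - j) = n - k := by omega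
      have c : n.choose k * k.choose j = n.choose j * (n - j).choose (k - j) :=
        Nat.choose_mul (by omega)
      simp only [e]
      calc _ = (n.choose k * k.choose j) * (x j * y (k - j) * z (n - k)) := by ring
        _ = _ := by rw [c]; ring
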